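/- (Proposition 1, limiting loss density.) Assume Λ ≠ 0 and let L̄ = Φ(Ξ/(ζ√T) − ΛY/ζ), where Y is standard normal. Then the law of L̄ is absolutely continuous with respect to Lebesgue measure on (0,1) with density f(x) = (ζ/|Λ|)·φ((ζ·Φ⁻¹(x) − Σ·Φ⁻¹(p))/|Λ|)/φ(Φ⁻¹(x)) for x ∈ (0,1), where p = Φ(Ξ/(Σ√T)). -/

import Mathlib

open MeasureTheory ProbabilityTheory Real Filter Set

/-- The density of the standard normal distribution. -/
noncomputable def stdPdf (y : ℝ) : ℝ := Real.exp (-y ^ 2 / 2) / Real.sqrt (2 * Real.pi)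

/-- The cumulative distribution function `Φ` of the standard normal distribution. -/
noncomputable def stdCdf (x : ℝ) : ℝ := ∫ y in Set.Iic x, stdPdf y

/-- The inverse `Φ⁻¹` of the standard normal cumulative distribution function: since `stdCdf`
is injective, `stdCdfInv` is the genuine inverse of `Φ` on `(0,1)`. -/
noncomputable def stdCdfInv : ℝ → ℝ := Function.invFun stdCdf

theorem stdPdf_eq (y : ℝ) : stdPdf y = gaussianPDFReal 0 1 y := by
  simp [stdPdf, gaussianPDFReal]
  field_simp

theorem stdPdf_pos (y : ℝ) : 0 < stdPdf y := by
  unfold stdPdf; positivity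

theorem stdPdf_cont : Continuous stdPdf := by
  unfold stdPdf; fun_prop

theorem stdPdf_integrable : Integrable stdPdf := by
  have : stdPdf = gaussianPDFReal 0 1 := funext stdPdf_eq
  rw [this]; exact integrable_gaussianPDFReal 0 1

theorem stdCdf_hasDerivAt (x : ℝ) : HasDerivAt stdCdf (stdPdf x) x := by
  have h1 : stdCdf = fun u => stdCdf 0 + ∫ y in (0:ℝ)..u, stdPdf y := by
    funext u
    have := intervalIntegral.integral_Iic_sub_Iic (f := stdPdf) (μ := volume) (a := 0) (b := u)
      stdPdf_integrable.integrableOn stdPdf_integrable.integrableOn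
    simp only [stdCdf]
    linarith
  rw [h1]
  exact (intervalIntegral.integral_hasDerivAt_right
    (stdPdf_cont.intervalIntegrable _ _)
    (stdPdf_cont.stronglyMeasurableAtFilter _ _) stdPdf_cont.continuousAt).const_add _

theorem stdCdf_strictMono : StrictMono stdCdf := by
  apply strictMono_of_deriv_pos
  intro x
  rw [(stdCdf_hasDerivAt x).deriv]; exact stdPdf_pos x

theorem stdCdf_cont : Continuous stdCdf :=
  continuous_iff_continuousAt.2 fun x => (stdCdf_hasDerivAt x).continuousAt

theorem stdCdf_eq_cdf (x : ℝ) : stdCdf x = cdf (gaussianReal 0 1) x := by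
  rw [cdf_eq_real, measureReal_def, gaussianReal_apply_eq_integral 0 one_ne_zero,
    ENNReal.toReal_ofReal]
  · simp only [stdCdf, stdPdf_eq]
  · exact integral_nonneg fun y => gaussianPDFReal_nonneg 0 1 y

theorem stdCdf_surj {x : ℝ} (hx : x ∈ Set.Ioo (0 : ℝ) 1) : ∃ u, stdCdf u = x := by
  have hc : stdCdf = fun x => cdf (gaussianReal 0 1) x := funext stdCdf_eq_cdf
  have hbot : Tendsto stdCdf atBot (nhds 0) := by rw [hc]; exact tendsto_cdf_atBot _
  have htop : Tendsto stdCdf atTop (nhds 1) := by rw [hc]; exact tendsto_cdf_atTop _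
  obtain ⟨a, ha⟩ := (hbot.eventually (gt_mem_nhds hx.1)).exists
  obtain ⟨b, hb⟩ := (htop.eventually (lt_mem_nhds hx.2)).exists
  exact mem_range_of_exists_le_of_exists_ge stdCdf_cont ⟨a, ha.le⟩ ⟨b, hb.le⟩

theorem stdCdfInv_stdCdf (u : ℝ) : stdCdfInv (stdCdf u) = u :=
  Function.leftInverse_invFun stdCdf_strictMono.injective u

/-- Proposition 1, limiting loss density: if `Λ ≠ 0`, the law of
`L̄ = Φ(Ξ/(ζ√T) − ΛY/ζ)` is absolutely continuous w.r.t. Lebesgue measure on `(0,1)` with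
density `f(x) = (ζ/|Λ|) φ((ζΦ⁻¹(x) − ΣΦ⁻¹(p))/|Λ|)/φ(Φ⁻¹(x))`. -/
theorem limiting_loss_density
    {Ω : Type*} [MeasurableSpace Ω] (P : Measure Ω) [IsProbabilityMeasure P]
    (T A B μ α σ β ρ θ : ℝ)
    (hT : 0 < T) (hA : 0 < A) (hB : 0 < B) (hσ : 0 < σ) (hβ : 0 < β)
    (hρ : ρ ∈ Set.Icc (0 : ℝ) 1) (hθ : θ ∈ Set.Icc (0 : ℝ) 1)
    (Y : Ω → ℝ) (hmY : Measurable Y)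
    (hY : Measure.map Y P = gaussianReal 0 1)
    (Sg Ξ ζ Λ : ℝ)
    (hSg : Sg = Real.sqrt (σ ^ 2 + β ^ 2 - 2 * σ * β * Real.sqrt (ρ * θ)))
    (hΞ : Ξ = Real.log (B / A) - (μ - α - (σ ^ 2 - β ^ 2) / 2) * T)
    (hζ : ζ = Real.sqrt (σ ^ 2 * (1 - ρ) + β ^ 2 * (1 - θ)))
    (hΛ : Λ = σ * Real.sqrt ρ - β * Real.sqrt θ)
    (hSgpos : 0 < Sg) (hζpos : 0 < ζ) (hΛne : Λ ≠ 0)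
    (p : ℝ) (hp : p = stdCdf (Ξ / (Sg * Real.sqrt T)))
    (f : ℝ → ℝ)
    (hf : ∀ x ∈ Set.Ioo (0 : ℝ) 1,
      f x = (ζ / |Λ|) * stdPdf ((ζ * stdCdfInv x - Sg * stdCdfInv p) / |Λ|)
              / stdPdf (stdCdfInv x)) :
    ∀ s : Set ℝ, MeasurableSet s → s ⊆ Set.Ioo (0 : ℝ) 1 →
      P ((fun ω => stdCdf (Ξ / (ζ * Real.sqrt T) - Λ * Y ω / ζ)) ⁻¹' s)
        = ENNReal.ofReal (∫ x in s, f x) := by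
  intro s hs hsub
  have hrT : 0 < Real.sqrt T := Real.sqrt_pos.2 hT
  have hL : 0 < |Λ| := abs_pos.2 hΛne
  set E : Set ℝ := stdCdf ⁻¹' s with hE
  have hEm : MeasurableSet E := stdCdf_cont.measurable hs
  have him : stdCdf '' E = s :=
    Set.image_preimage_eq_of_subset fun x hx => stdCdf_surj (hsub hx)
  set m : ℝ := Ξ / (ζ * Real.sqrt T) with hm
  set l : ℝ := -(Λ / ζ) with hl
  have hlne : l ≠ 0 := neg_ne_zero.2 (div_ne_zero hΛne hζpos.ne')
  set v : NNReal := NNReal.mk (l ^ 2) (sq_nonneg l) with hv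
  have hvval : (v : ℝ) = Λ ^ 2 / ζ ^ 2 := by
    simp [hv, hl, div_pow]
  have hvne : v ≠ 0 := by
    intro h
    rw [h] at hvval
    have : Λ ^ 2 / ζ ^ 2 ≠ 0 := by positivity
    exact this (by simpa using hvval.symm)
  have hlaw : Measure.map (fun ω => m - Λ * Y ω / ζ) P = gaussianReal m v := by
    have h1 : (fun ω => m - Λ * Y ω / ζ) = (fun x => x + m) ∘ (fun x => l * x) ∘ Y := by
      funext ω; simp only [Function.comp, hl]; ring
    rw [h1, ← Measure.map_map (by fun_prop) (by fun_prop),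
      ← Measure.map_map (by fun_prop) hmY, hY, gaussianReal_map_const_mul,
      gaussianReal_map_add_const]
    simp [hv]
  have hpre : (fun ω => stdCdf (m - Λ * Y ω / ζ)) ⁻¹' s
      = (fun ω => m - Λ * Y ω / ζ) ⁻¹' E := rfl
  rw [hpre, ← Measure.map_apply (by fun_prop) hEm, hlaw,
    gaussianReal_apply_eq_integral m hvne]
  congr 1
  rw [← him, integral_image_eq_integral_abs_deriv_smul hEm
    (fun x _ => (stdCdf_hasDerivAt x).hasDerivWithinAt) stdCdf_strictMono.injective.injOn]
  refine setIntegral_congr_fun hEm fun u hu => ?_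
  have hSp : Sg * stdCdfInv p = Ξ / Real.sqrt T := by
    rw [hp, stdCdfInv_stdCdf]; field_simp
  have hpos := stdPdf_pos u
  simp only [smul_eq_mul]
  rw [hf _ (hsub hu), stdCdfInv_stdCdf, hSp, abs_of_pos hpos,
    mul_div_cancel₀ _ hpos.ne']
  simp only [gaussianPDFReal, stdPdf, hvval]
  have h2 : Real.sqrt (2 * Real.pi * (Λ ^ 2 / ζ ^ 2)) = Real.sqrt (2 * Real.pi) * (|Λ| / ζ) := by
    rw [Real.sqrt_mul (by positivity), Real.sqrt_div (by positivity), Real.sqrt_sq_eq_abs,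
      Real.sqrt_sq hζpos.le]
  have h3 : -(u - m) ^ 2 / (2 * (Λ ^ 2 / ζ ^ 2))
      = -((ζ * u - Ξ / Real.sqrt T) / |Λ|) ^ 2 / 2 := by
    rw [div_pow, sq_abs, hm]
    field_simp
  rw [h2, h3]
  field_simp
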